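/- arXiv:1703.05531 — 2 statements merged into one kernel-verified Lean document; each statement's English description precedes it below -/
import Mathlib

section
/- Let ℱ denote the set of all finite image partition regular matrices with entries from ℚ, and let B be any (finite or infinite) image partition regular matrix. Then I(B) ∩ (⋂_{A ∈ ℱ} I(A)) ≠ ∅. -/
/- `ℕ+` plays the role of the paper's `ℕ = {1,2,3,…}`.  `Ultrafilter ℕ+` is `βℕ`. -/

/-- Product of ultrafilters: `U ∈ umul p q ↔ {x | {y | x*y ∈ U} ∈ q} ∈ p`. -/
def umul (p q : Ultrafilter ℕ+) : Ultrafilter ℕ+ :=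
  p.bind fun x => q.map fun y => x * y

/-- Sum of ultrafilters: `U ∈ uadd p q ↔ {x | {y | x+y ∈ U} ∈ q} ∈ p`. -/
def uadd (p q : Ultrafilter ℕ+) : Ultrafilter ℕ+ :=
  p.bind fun x => q.map fun y => x + y

/-- The matrix-vector product `Ax` (computed in `ℚ`) of a row-finite matrix `A`
with a vector `x` of positive integers. -/
noncomputable def mulVecQ {ι κ : Type} (A : ι → κ → ℚ) (x : κ → ℕ+) : ι → ℚ :=
  fun i => ∑ᶠ j, A i j * ((x j : ℕ) : ℚ)

/-- All entries of the vector `y` are (positive) natural numbers lying in `P`. -/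
def entriesIn {ι : Type} (y : ι → ℚ) (P : Set ℕ+) : Prop :=
  ∀ i, ∃ n ∈ P, y i = ((n : ℕ) : ℚ)

/-- `A` is image partition regular: for every finite coloring of `ℕ` there is
a vector `x` over `ℕ` all entries of whose image `Ax` are monochromatic. -/
def IPR {ι κ : Type} (A : ι → κ → ℚ) : Prop :=
  ∀ (r : ℕ) (c : ℕ+ → Fin r), ∃ (k : Fin r) (x : κ → ℕ+),
    entriesIn (mulVecQ A x) {n | c n = k}

/-- `I(A) = {p ∈ βℕ : for every P ∈ p there is x over ℕ with all entries of Ax in P}`. -/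
def ISet {ι κ : Type} (A : ι → κ → ℚ) : Set (Ultrafilter ℕ+) :=
  {p | ∀ P ∈ p, ∃ x : κ → ℕ+, entriesIn (mulVecQ A x) P}

theorem mem_umul_aux (p q : Ultrafilter ℕ+) (P : Set ℕ+) :
    P ∈ umul p q ↔ {x | {y | x * y ∈ P} ∈ q} ∈ p := Iff.rfl

theorem mulVecQ_smul_aux {ι κ : Type} (A : ι → κ → ℚ) (a : ℕ+) (x : κ → ℕ+) (i : ι) :
    mulVecQ A (fun j => a * x j) i = ((a : ℕ) : ℚ) * mulVecQ A x i := by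
  unfold mulVecQ
  rw [← smul_eq_mul, smul_finsum]
  refine finsum_congr fun j => ?_
  rw [PNat.mul_coe, Nat.cast_mul, smul_eq_mul]
  ring

theorem entriesIn_smul_aux {ι κ : Type} (A : ι → κ → ℚ) (a : ℕ+) (x : κ → ℕ+) (P : Set ℕ+)
    (h : ∀ i, ∃ n, a * n ∈ P ∧ mulVecQ A x i = ((n : ℕ) : ℚ)) :
    entriesIn (mulVecQ A (fun j => a * x j)) P := by
  intro i
  obtain ⟨n, hn, hx⟩ := h i
  refine ⟨a * n, hn, ?_⟩
  rw [mulVecQ_smul_aux, hx, PNat.mul_coe, Nat.cast_mul]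

/-- `I(A)` is a left ideal. -/
theorem ISet_left_aux {ι κ : Type} (A : ι → κ → ℚ) (p q : Ultrafilter ℕ+) (hq : q ∈ ISet A) :
    umul p q ∈ ISet A := by
  intro P hP
  rw [mem_umul_aux] at hP
  obtain ⟨a, ha⟩ := p.nonempty_of_mem hP
  obtain ⟨x, hx⟩ := hq _ ha
  exact ⟨_, entriesIn_smul_aux A a x P fun i => hx i⟩

/-- `I(A)` is a right ideal when `A` has finitely many rows. -/
theorem ISet_right_aux {ι κ : Type} [Finite ι] (A : ι → κ → ℚ) (p q : Ultrafilter ℕ+)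
    (hp : p ∈ ISet A) : umul p q ∈ ISet A := by
  intro P hP
  rw [mem_umul_aux] at hP
  obtain ⟨x, hx⟩ := hp _ hP
  choose n hn hxn using hx
  have h : (⋂ i, {y | n i * y ∈ P}) ∈ (q : Filter ℕ+) := Filter.iInter_mem.2 hn
  obtain ⟨a, ha⟩ := q.nonempty_of_mem h
  rw [Set.mem_iInter] at ha
  refine ⟨_, entriesIn_smul_aux A a x P fun i => ⟨n i, ?_, hxn i⟩⟩
  rw [mul_comm]
  exact ha i

theorem ISet_closed_aux {ι κ : Type} (A : ι → κ → ℚ) : IsClosed (ISet A) := by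
  have : ISet A = ⋂ (P : Set ℕ+) (_ : ¬ ∃ x : κ → ℕ+, entriesIn (mulVecQ A x) P),
      {p : Ultrafilter ℕ+ | P ∈ p}ᶜ := by
    ext p
    simp only [ISet, Set.mem_setOf_eq, Set.mem_iInter, Set.mem_compl_iff]
    exact ⟨fun h P hP hp => hP (h P hp), fun h P hp => by_contra fun hP => h P hP hp⟩
  rw [this]
  exact isClosed_iInter fun P => isClosed_iInter fun _ => (ultrafilter_isOpen_basic P).isClosed_compl

theorem ISet_nonempty_aux {ι κ : Type} (A : ι → κ → ℚ) (hA : IPR A) : (ISet A).Nonempty := by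
  obtain ⟨F, hF⟩ := Ultrafilter.exists_ultrafilter_of_finite_inter_nonempty
    {Q : Set ℕ+ | ¬ ∃ x : κ → ℕ+, entriesIn (mulVecQ A x) Qᶜ} (by
      intro T hT
      by_contra hne
      have h : ∀ n : ℕ+, ∃ Q : T, n ∉ (Q : Set ℕ+) := by
        intro n
        by_contra hn
        push Not at hn
        exact hne ⟨n, fun Q hQ => hn ⟨Q, hQ⟩⟩
      choose c hc using h
      obtain ⟨k, x, hx⟩ := hA _ (fun n => T.equivFin (c n))
      refine hT (T.equivFin.symm k).2 ⟨x, fun i => ?_⟩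
      obtain ⟨n, hn, hxn⟩ := hx i
      refine ⟨n, ?_, hxn⟩
      have hk : T.equivFin.symm k = c n := by
        rw [← (show T.equivFin (c n) = k from hn), Equiv.symm_apply_apply]
      rw [hk]
      exact hc n)
  refine ⟨F, fun P hP => ?_⟩
  by_contra hx
  have : Pᶜ ∈ F := hF (by simpa using hx)
  exact Ultrafilter.compl_notMem_iff.2 hP this

/-- Theorem 2.5: if `B` is any (finite or infinite, row-finite)
image partition regular matrix and `ℱ` is the class of all finite image partition
regular matrices with rational entries, then `I(B) ∩ ⋂_{A ∈ ℱ} I(A) ≠ ∅`. -/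
theorem stmt_3 {ι κ : Type} (B : ι → κ → ℚ)
    (hrow : ∀ i, {j | B i j ≠ 0}.Finite) (hB : IPR B) :
    (ISet B ∩ ⋂ (u : ℕ) (v : ℕ) (A : Fin u → Fin v → ℚ) (_ : IPR A),
      ISet A).Nonempty := by
  have h : (⋂ t : (Σ u : ℕ, Σ v : ℕ, {A : Fin u → Fin v → ℚ // IPR A}),
      ISet t.2.2.1).Nonempty := by
    refine CompactSpace.iInter_nonempty (fun t => ISet_closed_aux _) fun s => ?_
    classical
    induction s using Finset.induction_on with
    | empty => exact ⟨pure 1, by simp⟩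
    | insert t s _ ih =>
      obtain ⟨p, hp⟩ := ih
      obtain ⟨q, hq⟩ := ISet_nonempty_aux t.2.2.1 t.2.2.2
      refine ⟨umul p q, ?_⟩
      simp only [Set.mem_iInter] at hp ⊢
      intro r hr
      rcases Finset.mem_insert.1 hr with rfl | hr
      · exact ISet_left_aux _ p q hq
      · exact ISet_right_aux _ p q (hp r hr)
  obtain ⟨p, hp⟩ := h
  obtain ⟨q, hq⟩ := ISet_nonempty_aux B hB
  refine ⟨umul p q, ISet_left_aux B p q hq, ?_⟩
  simp only [Set.mem_iInter] at hp ⊢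
  intro u v A hA
  exact ISet_right_aux A p q (hp ⟨u, v, A, hA⟩)
end

section
/- Let p ∈ βℕ satisfy p + p = p, let m ∈ ℕ, and let U ∈ p^m, where p^m denotes the m-fold product p·p·…·p in (βℕ,·). Then there exists a sequence {x_t}_{t=1}^∞ in ℕ such that PS_m({x_t}_{t=1}^∞) ⊆ U. -/
/-- `upow p m` is the `m`-fold product `p·p·…·p` in `(βℕ,·)` (for `m ≥ 1`). -/
def upow (p : Ultrafilter ℕ+) : ℕ → Ultrafilter ℕ+
  | 0 => p
  | 1 => p
  | n + 2 => umul (upow p (n + 1)) p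

/-- `PSm m x` is `PS_m({x_t})`: all products `∏_{i=1}^m ∑_{t ∈ F_i} x_t` where
`F_1, …, F_m` are finite nonempty subsets of the index set with
`max F_i < min F_{i+1}`. -/
def PSm (m : ℕ) (x : ℕ → ℕ+) : Set ℕ+ :=
  {z | ∃ F : Fin m → Finset ℕ,
    (∀ i, (F i).Nonempty) ∧
    (∀ i j : Fin m, i < j → ∀ a ∈ F i, ∀ b ∈ F j, a < b) ∧
    (z : ℕ) = ∏ i, ∑ t ∈ F i, (x t : ℕ)}

open Filter

theorem mem_umul_iff (p q : Ultrafilter ℕ+) (U : Set ℕ+) :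
    U ∈ umul p q ↔ ∀ᶠ x in (p : Filter ℕ+), ∀ᶠ y in (q : Filter ℕ+), x * y ∈ U := Iff.rfl

theorem mem_uadd_iff (p q : Ultrafilter ℕ+) (U : Set ℕ+) :
    U ∈ uadd p q ↔ ∀ᶠ x in (p : Filter ℕ+), ∀ᶠ y in (q : Filter ℕ+), x + y ∈ U := Iff.rfl

theorem mem_upow_left (p : Ultrafilter ℕ+) (n : ℕ) : ∀ U : Set ℕ+,
    U ∈ upow p (n + 2) ↔ ∀ᶠ x in (p : Filter ℕ+), {y | x * y ∈ U} ∈ upow p (n + 1) := by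
  induction n with
  | zero => intro U; exact Iff.rfl
  | succ n ih =>
    intro U
    have h1 : U ∈ upow p (n + 1 + 2) ↔
      {x | ∀ᶠ y in (p : Filter ℕ+), x * y ∈ U} ∈ upow p (n + 2) := Iff.rfl
    rw [h1, ih]
    refine eventually_congr (Eventually.of_forall fun a => ?_)
    have h2 : {y | a * y ∈ U} ∈ upow p (n + 1 + 1) ↔
      {x | ∀ᶠ y in (p : Filter ℕ+), a * (x * y) ∈ U} ∈ upow p (n + 1) := Iff.rfl
    rw [h2]
    simp only [Set.mem_ofPred_eq, mul_assoc]

/-- The filter of lists of `k` successive choices along `p`. -/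
def listFilter (p : Ultrafilter ℕ+) : ℕ → Filter (List ℕ+)
  | 0 => pure []
  | k + 1 => (p : Filter ℕ+).bind fun x => (listFilter p k).map fun l => x :: l

theorem ev_zero (p : Ultrafilter ℕ+) (P : List ℕ+ → Prop) :
    (∀ᶠ l in listFilter p 0, P l) ↔ P [] := by
  simp [listFilter]

theorem ev_succ (p : Ultrafilter ℕ+) (k : ℕ) (P : List ℕ+ → Prop) :
    (∀ᶠ l in listFilter p (k + 1), P l) ↔
      ∀ᶠ x in (p : Filter ℕ+), ∀ᶠ l in listFilter p k, P (x :: l) := Iff.rfl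

theorem ev_length (p : Ultrafilter ℕ+) (k : ℕ) : ∀ᶠ l in listFilter p k, l.length = k := by
  induction k with
  | zero => rw [ev_zero]; rfl
  | succ k ih =>
    rw [ev_succ]
    refine Eventually.of_forall fun x => ?_
    filter_upwards [ih] with l hl
    simp [hl]

theorem mem_upow_iff (p : Ultrafilter ℕ+) (n : ℕ) : ∀ U : Set ℕ+,
    U ∈ upow p (n + 1) ↔ ∀ᶠ l in listFilter p (n + 1), l.prod ∈ U := by
  induction n with
  | zero =>
    intro U
    rw [ev_succ]
    simp only [ev_zero, List.prod_singleton]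
    exact Iff.rfl
  | succ n ih =>
    intro U
    rw [mem_upow_left, ev_succ]
    refine eventually_congr (Eventually.of_forall fun a => ?_)
    rw [ih]
    simp only [List.prod_cons, Set.mem_ofPred_eq]

/-- The invariant of the construction. -/
def Inv17 (p : Ultrafilter ℕ+) (m : ℕ) (S : Set (List ℕ+)) : Prop :=
  ∀ k ≤ m, ∀ᶠ l in listFilter p k, l ∈ S

/-- The next set of lists, after `x` has been chosen. -/
def next17 (m : ℕ) (x : ℕ+) (S : Set (List ℕ+)) : Set (List ℕ+) :=
  {l | l ∈ S ∧ (l.length < m → x :: l ∈ S) ∧ ∀ y t, l = y :: t → (x + y) :: t ∈ S}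

theorem step17 (p : Ultrafilter ℕ+) (hp : uadd p p = p) (m : ℕ) (S : Set (List ℕ+))
    (hS : Inv17 p m S) : ∃ x, Inv17 p m (next17 m x S) := by
  have h1 : ∀ k ∈ Finset.range (m + 1), ∀ᶠ x in (p : Filter ℕ+),
      ∀ᶠ l in listFilter p k, l ∈ next17 m x S := by
    intro k hk
    have hk : k ≤ m := by simpa [Nat.lt_succ_iff] using hk
    have a1 : ∀ᶠ x in (p : Filter ℕ+),
        ∀ᶠ l in listFilter p k, (l.length < m → x :: l ∈ S) := by
      rcases hk.lt_or_eq with h | h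
      · have := (ev_succ p k _).1 (hS (k + 1) h)
        filter_upwards [this] with x hx
        filter_upwards [hx] with l hl _ using hl
      · refine Eventually.of_forall fun x => ?_
        filter_upwards [ev_length p k] with l hl h'
        omega
    have a2 : ∀ᶠ x in (p : Filter ℕ+),
        ∀ᶠ l in listFilter p k, (∀ y t, l = y :: t → (x + y) :: t ∈ S) := by
      cases k with
      | zero =>
        refine Eventually.of_forall fun x => ?_
        rw [ev_zero]
        intro y t h
        cases h
      | succ k =>
        have h2 : {z | ∀ᶠ l in listFilter p k, z :: l ∈ S} ∈ p := (ev_succ p k _).1 (hS (k + 1) hk)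
        have h3 : ∀ A : Set ℕ+, A ∈ p → A ∈ uadd p p := by
          intro A hA
          rw [hp]
          exact hA
        have h2 := (mem_uadd_iff p p _).1 (h3 _ h2)
        filter_upwards [h2] with x hx
        rw [ev_succ]
        filter_upwards [hx] with y hy
        filter_upwards [hy] with l hl y' t h
        cases h
        exact hl
    filter_upwards [a1, a2] with x b1 b2
    filter_upwards [b1, b2, hS k hk] with l c1 c2 c3
    exact ⟨c3, c1, c2⟩
  obtain ⟨x, hx⟩ := ((Finset.eventually_all _).2 h1).exists
  exact ⟨x, fun k hk => hx k (by simpa [Nat.lt_succ_iff] using hk)⟩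

/-- `Sums17 x n l`: `l` is a list of sums over successive blocks of indices `≥ n`. -/
inductive Sums17 (x : ℕ → ℕ+) : ℕ → List ℕ+ → Prop
  | nil (n) : Sums17 x n []
  | skip (n l) : Sums17 x (n + 1) l → Sums17 x n l
  | single (n l) : Sums17 x (n + 1) l → Sums17 x n (x n :: l)
  | add (n y l) : Sums17 x (n + 1) (y :: l) → Sums17 x n ((x n + y) :: l)

theorem exists_sums17 (x : ℕ → ℕ+) (d : ℕ) : ∀ (n : ℕ) (L : List (Finset ℕ)),
    (∀ F ∈ L, F.Nonempty) → (L.Pairwise fun F G => ∀ a ∈ F, ∀ b ∈ G, a < b) →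
    (∀ F ∈ L, ∀ a ∈ F, n ≤ a ∧ a < n + d) →
    ∃ l : List ℕ+, Sums17 x n l ∧
      l.map (fun z : ℕ+ => (z : ℕ)) = L.map fun F => ∑ t ∈ F, (x t : ℕ) := by
  induction d with
  | zero =>
    intro n L h1 h2 h3
    cases L with
    | nil => exact ⟨[], .nil n, rfl⟩
    | cons F L =>
      obtain ⟨a, ha⟩ := h1 F (by simp)
      have := h3 F (by simp) a ha
      omega
  | succ d ih =>
    intro n L h1 h2 h3
    cases L with
    | nil => exact ⟨[], .nil n, rfl⟩
    | cons F L =>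
      rw [List.pairwise_cons] at h2
      have hL : ∀ G ∈ L, ∀ a ∈ G, n + 1 ≤ a ∧ a < n + 1 + d := by
        intro G hG a ha
        obtain ⟨b, hb⟩ := h1 F (by simp)
        have := h3 F (by simp) b hb
        have := h3 G (by simp [hG]) a ha
        have := h2.1 G hG b hb a ha
        omega
      have hL1 : ∀ G ∈ L, G.Nonempty := fun G hG => h1 G (by simp [hG])
      have hF : ∀ a ∈ F.erase n, n + 1 ≤ a ∧ a < n + 1 + d := by
        intro a ha
        rw [Finset.mem_erase] at ha
        have := h3 F (by simp) a ha.2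
        omega
      by_cases he : (F.erase n).Nonempty
      · obtain ⟨l, hl, hm⟩ := ih (n + 1) (F.erase n :: L)
          (by
            intro G hG
            rcases List.mem_cons.1 hG with rfl | hG
            · exact he
            · exact hL1 G hG)
          (List.pairwise_cons.2
            ⟨fun G hG a ha b hb => h2.1 G hG a (Finset.mem_of_mem_erase ha) b hb, h2.2⟩)
          (by
            intro G hG
            rcases List.mem_cons.1 hG with rfl | hG
            · exact hF
            · exact hL G hG)
        by_cases hn : n ∈ F
        · cases l with
          | nil => simp at hm
          | cons y l =>
            refine ⟨_, .add n y l hl, ?_⟩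
            simp only [List.map_cons, List.cons.injEq] at hm ⊢
            refine ⟨?_, hm.2⟩
            rw [PNat.add_coe, hm.1, Finset.add_sum_erase F (fun t => (x t : ℕ)) hn]
        · rw [Finset.erase_eq_of_notMem hn] at hm
          exact ⟨l, .skip n l hl, hm⟩
      · obtain ⟨l, hl, hm⟩ := ih (n + 1) L hL1 h2.2 hL
        rw [Finset.not_nonempty_iff_eq_empty, Finset.erase_eq_empty_iff] at he
        have hFn : F = {n} := he.resolve_left (h1 F (by simp)).ne_empty
        refine ⟨_, .single n l hl, ?_⟩
        simp [hm, hFn]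

/-- Theorem 3.15: if `p ∈ βℕ` satisfies `p + p = p`, `m ∈ ℕ`
and `U ∈ p^m` (the `m`-fold product in `(βℕ,·)`), then there is a sequence
`{x_t}` in `ℕ` with `PS_m({x_t}) ⊆ U`. -/
theorem stmt_17 (p : Ultrafilter ℕ+) (hp : uadd p p = p) (m : ℕ) (hm : 0 < m)
    (U : Set ℕ+) (hU : U ∈ upow p m) :
    ∃ x : ℕ → ℕ+, PSm m x ⊆ U := by
  obtain ⟨n, rfl⟩ : ∃ n, m = n + 1 := ⟨m - 1, by omega⟩
  have h0 : Inv17 p (n + 1) {l | l.length = n + 1 → l.prod ∈ U} := by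
    intro k hk
    rcases hk.lt_or_eq with h | rfl
    · filter_upwards [ev_length p k] with l hl h'
      omega
    · filter_upwards [(mem_upow_iff p n U).1 hU] with l hl _ using hl
  choose f hf using step17 p hp (n + 1)
  let S : ℕ → {S // Inv17 p (n + 1) S} := fun t =>
    Nat.rec ⟨_, h0⟩ (fun _ T => ⟨next17 (n + 1) (f T.1 T.2) T.1, hf T.1 T.2⟩) t
  let x : ℕ → ℕ+ := fun t => f (S t).1 (S t).2
  have hsucc : ∀ t, (S (t + 1)).1 = next17 (n + 1) (x t) (S t).1 := fun t => rfl
  have key : ∀ t l, Sums17 x t l → l.length ≤ n + 1 → l ∈ (S t).1 := by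
    intro t l h
    induction h with
    | nil t => exact fun _ => (ev_zero p _).1 ((S t).2 0 (Nat.zero_le _))
    | skip t l _ ih =>
      intro hl
      have := ih hl
      rw [hsucc] at this
      exact this.1
    | single t l _ ih =>
      intro hl
      rw [List.length_cons] at hl
      have := ih (by omega)
      rw [hsucc] at this
      exact this.2.1 (by omega)
    | add t y l _ ih =>
      intro hl
      have := ih hl
      rw [hsucc] at this
      exact this.2.2 y l rfl
  refine ⟨x, ?_⟩
  rintro z ⟨F, hF1, hF2, hz⟩
  obtain ⟨l, hl, hm⟩ := exists_sums17 x ((Finset.univ.biUnion F).sup id + 1) 0 (List.ofFn F)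
    (by
      intro G hG
      obtain ⟨i, rfl⟩ := (List.mem_ofFn' F G).1 hG
      exact hF1 i)
    (by
      rw [List.pairwise_ofFn]
      intro i j hij
      exact hF2 i j hij)
    (by
      intro G hG a ha
      obtain ⟨i, rfl⟩ := (List.mem_ofFn' F G).1 hG
      have : a ≤ (Finset.univ.biUnion F).sup id :=
        Finset.le_sup (f := id) (Finset.mem_biUnion.2 ⟨i, Finset.mem_univ i, ha⟩)
      omega)
  have hlen : l.length = n + 1 := by
    have := congrArg List.length hm
    simpa using this
  have hprod : l.prod = z := by
    apply PNat.coe_injective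
    rw [hz, ← List.prod_ofFn]
    have h3 := congrArg List.prod hm
    rw [List.map_ofFn] at h3
    have h4 : ((l.prod : ℕ+) : ℕ) = (l.map fun z : ℕ+ => (z : ℕ)).prod :=
      map_list_prod PNat.coeMonoidHom l
    rw [h4, h3]
    rfl
  have h5 : l.length = n + 1 → l.prod ∈ U := key 0 l hl hlen.le
  rw [← hprod]
  exact h5 hlen
end
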